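/- For a deterministic multiset acceptor evaluated greedily under confluence, acceptance of a multiset M can be decided by any maximal rewriting sequence from the initial configuration: if the failure-extended rewriting relation is confluent, then M ⊨ (p₀, p) (i.e., (p₀, M) →* (p, ∅)) holds if and only if every maximal rewriting sequence from (p₀, M) ends at (p, ∅). -/

import Mathlib

open Relation

/-- One step of horizontal rewriting. -/
def HStep {P D : Type*} (rules : Set (P × (D → Prop) × P)) :
    P × Multiset D → P × Multiset D → Prop :=
  fun c c' => ∃ d φ, (c.1, φ, c'.1) ∈ rules ∧ φ d ∧ c.2 = c'.2 + {d}

/-- Failure-extended horizontal rewriting on `Option (P × Multiset D)`, where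
`none` is the failure element ⊥: `(p, M) → ⊥` whenever `M ≠ ∅` and no ordinary
step applies. -/
def HStepX {P D : Type*} (rules : Set (P × (D → Prop) × P)) :
    Option (P × Multiset D) → Option (P × Multiset D) → Prop :=
  fun c c' =>
    (∃ a b, c = some a ∧ c' = some b ∧ HStep rules a b) ∨
    (∃ a, c = some a ∧ c' = none ∧ a.2 ≠ 0 ∧ ∀ b, ¬ HStep rules a b)

/-!
Every step of the failure-extended relation strictly decreases the number of remaining elements
(⊥ counting zero; a failure step discards a nonempty multiset), so every configuration reaches a
normal form, and by confluence only one. Acceptance by `p` says that this normal form is `(p, ∅)`,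
because a rewriting sequence that has entered ⊥ never leaves it.
-/

section AbstractRewriting

variable {α : Type*} {r : α → α → Prop} {a b c n : α}

/-- A normal form of an abstract rewriting relation: an element without successor. When `r` is
terminating, these are the endpoints of the maximal rewriting sequences. -/
def IsNormalForm (r : α → α → Prop) (a : α) : Prop :=
  ∀ b, ¬ r a b

theorem IsNormalForm.eq_of_join (hb : IsNormalForm r b) (hc : IsNormalForm r c)
    (h : Join (ReflTransGen r) b c) : b = c := by
  obtain ⟨d, hbd, hcd⟩ := h
  exact ((reflTransGen_iff_eq hb).mp hbd).symm.trans ((reflTransGen_iff_eq hc).mp hcd)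

theorem exists_reflTransGen_isNormalForm (ha : Acc (Function.swap r) a) :
    ∃ n, ReflTransGen r a n ∧ IsNormalForm r n := by
  induction ha with
  | intro a _ ih =>
    by_cases hr : ∃ b, r a b
    · obtain ⟨b, hab⟩ := hr
      obtain ⟨n, hbn, hn⟩ := ih b hab
      exact ⟨n, .head hab hbn, hn⟩
    · exact ⟨a, .refl, not_exists.mp hr⟩

theorem reflTransGen_iff_forall_isNormalForm (hacc : Acc (Function.swap r) a)
    (hconf : ∀ b c, ReflTransGen r a b → ReflTransGen r a c → Join (ReflTransGen r) b c)
    (hn : IsNormalForm r n) :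
    ReflTransGen r a n ↔ ∀ c, ReflTransGen r a c → IsNormalForm r c → c = n := by
  refine ⟨fun han c hac hc => hc.eq_of_join hn (hconf c n hac han), fun h => ?_⟩
  obtain ⟨m, ham, hm⟩ := exists_reflTransGen_isNormalForm hacc
  exact h m ham hm ▸ ham

end AbstractRewriting

section HorizontalRewriting

variable {P D : Type*} {rules : Set (P × (D → Prop) × P)} {a b : P × Multiset D}

theorem hStepX_some_some : HStepX rules (some a) (some b) ↔ HStep rules a b := by
  simp [HStepX]

theorem hStepX_some_none :
    HStepX rules (some a) none ↔ a.2 ≠ 0 ∧ IsNormalForm (HStep rules) a := by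
  simp [HStepX, IsNormalForm]

theorem isNormalForm_hStepX_none : IsNormalForm (HStepX rules) none := by
  simp [IsNormalForm, HStepX]

theorem HStep.card_lt (h : HStep rules a b) : b.2.card < a.2.card := by
  obtain ⟨d, φ, -, -, hM⟩ := h
  simp [hM]

theorem isNormalForm_hStepX_some_iff : IsNormalForm (HStepX rules) (some a) ↔ a.2 = 0 := by
  constructor
  · intro ha
    by_contra hM
    exact ha none <| hStepX_some_none.mpr
      ⟨hM, fun b hab => ha (some b) (hStepX_some_some.mpr hab)⟩
  · rintro hM (_ | b) hstep
    · exact (hStepX_some_none.mp hstep).1 hM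
    · simpa [hM] using (hStepX_some_some.mp hstep).card_lt

/-- The number of elements still to be read, the termination measure of `HStepX`; the failure
element has size `0`. -/
def configSize (c : Option (P × Multiset D)) : ℕ :=
  c.elim 0 fun a => a.2.card

theorem HStepX.configSize_lt {c c' : Option (P × Multiset D)} (h : HStepX rules c c') :
    configSize c' < configSize c := by
  obtain ⟨a, b, rfl, rfl, hab⟩ | ⟨a, rfl, rfl, hM, -⟩ := h
  · exact hab.card_lt
  · exact Multiset.card_pos.mpr hM

theorem wellFounded_swap_hStepX (rules : Set (P × (D → Prop) × P)) :
    WellFounded (Function.swap (HStepX rules)) :=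
  Subrelation.wf HStepX.configSize_lt (measure configSize).wf

theorem reflTransGen_hStepX_some_some :
    ReflTransGen (HStepX rules) (some a) (some b) ↔ ReflTransGen (HStep rules) a b := by
  refine ⟨fun h => ?_, fun h => h.lift some fun _ _ => hStepX_some_some.mpr⟩
  generalize hc : some b = c at h
  induction h generalizing b with
  | refl =>
    cases hc
    exact .refl
  | @tail c _ _ hstep ih =>
    subst hc
    obtain _ | c := c
    · exact absurd hstep (isNormalForm_hStepX_none _)
    · exact (ih rfl).tail (hStepX_some_some.mp hstep)

end HorizontalRewriting

theorem stmt5_general {P D : Type*} (rules : Set (P × (D → Prop) × P)) (p₀ p : P) (M : Multiset D)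
    (hconf : ∀ y z, ReflTransGen (HStepX rules) (some (p₀, M)) y →
      ReflTransGen (HStepX rules) (some (p₀, M)) z → Join (ReflTransGen (HStepX rules)) y z) :
    ReflTransGen (HStep rules) (p₀, M) (p, 0) ↔
      ∀ c, ReflTransGen (HStepX rules) (some (p₀, M)) c →
        IsNormalForm (HStepX rules) c → c = some (p, 0) :=
  reflTransGen_hStepX_some_some.symm.trans <|
    reflTransGen_iff_forall_isNormalForm ((wellFounded_swap_hStepX rules).apply _) hconf
      (isNormalForm_hStepX_some_iff.mpr rfl)

/-- Under confluence of the failure-extended rewriting relation, acceptance can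
be decided by any maximal (greedy) rewriting sequence: `(p₀, M) →* (p, ∅)` iff
every maximal rewriting sequence from `(p₀, M)` ends at `(p, ∅)`, i.e. every
reachable configuration without successor equals `(p, ∅)`. -/
theorem stmt5 {P D : Type*} (rules : Set (P × (D → Prop) × P))
    (hconf : ∀ x y z, ReflTransGen (HStepX rules) x y → ReflTransGen (HStepX rules) x z →
      ∃ w, ReflTransGen (HStepX rules) y w ∧ ReflTransGen (HStepX rules) z w)
    (p₀ p : P) (M : Multiset D) :
    ReflTransGen (HStep rules) (p₀, M) (p, 0) ↔
      ∀ c, ReflTransGen (HStepX rules) (some (p₀, M)) c →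
        (∀ c', ¬ HStepX rules c c') → c = some (p, 0) :=
  stmt5_general rules p₀ p M (hconf _)
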